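/- arXiv:2105.02487 — 3 statements merged into one kernel-verified Lean document; each statement's English description precedes it below -/
import Mathlib

section
/- Suppose λ > max_{1≤k≤p−1} (1/n)·‖Σ_{i=1}^n a^{X_k}_i (a^Y_i)ᵀ‖_F. Then every global minimizer (B̂_1,…,B̂_{p−1}) of the group-lasso objective F satisfies B̂_k = 0 for every k ∈ {1,…,p−1}; that is, the estimated support set {k : ‖B̂_k‖_F > 0} is empty. -/
open Matrix Finset

/-- The Frobenius norm of a real matrix: `‖A‖_F = sqrt (trace (Aᵀ * A))`. -/
noncomputable def frobNorm {m n : ℕ} (A : Matrix (Fin m) (Fin n) ℝ) : ℝ :=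
  Real.sqrt (Matrix.trace (Aᵀ * A))

/-!
Compare the objective at `B` with its value at `0` and expand the square: if `V` is the fit of `B`,
then `‖V‖² / (2n) + λ ∑ₖ ‖Bₖ‖ ≤ ⟪Y, V⟫ / n`. The right-hand side equals `∑ₖ ⟪XₖᵀY, Bₖᵀ⟫ / n`, which
by Cauchy–Schwarz and the bound on `λ` is at most `λ ∑ₖ ‖Bₖ‖`. Hence `V = 0`, so the right-hand
side vanishes, and with it the penalty.
-/

section InnerProductSpace

open scoped RealInnerProductSpace

variable {E : Type*} [NormedAddCommGroup E] [InnerProductSpace ℝ E] {y v : E} {a c : ℝ}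

lemma nonpos_of_mul_norm_sub_sq_add_le (ha : 0 < a) (hcross : 2 * a * ⟪y, v⟫ ≤ c)
    (hle : a * ‖y - v‖ ^ 2 + c ≤ a * ‖y‖ ^ 2) : c ≤ 0 := by
  rw [norm_sub_sq_real] at hle
  have hv_sq : a * ‖v‖ ^ 2 ≤ 0 := by linarith
  have hv : v = 0 := by simpa using nonpos_of_mul_nonpos_right hv_sq ha
  simpa [hv] using hle

end InnerProductSpace

section Frobenius

variable {m n : ℕ}

lemma inner_toLp_vec (A B : Matrix (Fin m) (Fin n) ℝ) :
    inner ℝ (WithLp.toLp 2 (vec A)) (WithLp.toLp 2 (vec B)) = trace (Aᵀ * B) := by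
  rw [EuclideanSpace.inner_toLp_toLp, star_trivial, dotProduct_comm, vec_dotProduct_vec]

lemma frobNorm_eq_norm_toLp_vec (A : Matrix (Fin m) (Fin n) ℝ) :
    frobNorm A = ‖WithLp.toLp 2 (vec A)‖ := by
  rw [frobNorm, ← inner_toLp_vec, norm_eq_sqrt_real_inner]

lemma frobNorm_nonneg (A : Matrix (Fin m) (Fin n) ℝ) : 0 ≤ frobNorm A :=
  Real.sqrt_nonneg _

lemma frobNorm_sq (A : Matrix (Fin m) (Fin n) ℝ) : frobNorm A ^ 2 = ∑ i, ∑ j, A i j ^ 2 := by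
  rw [frobNorm_eq_norm_toLp_vec, EuclideanSpace.real_norm_sq_eq, Fintype.sum_prod_type,
    Finset.sum_comm]
  rfl

lemma frobNorm_eq_zero_iff {A : Matrix (Fin m) (Fin n) ℝ} : frobNorm A = 0 ↔ A = 0 := by
  rw [frobNorm_eq_norm_toLp_vec, norm_eq_zero, WithLp.toLp_eq_zero, vec_eq_zero_iff]

lemma frobNorm_transpose (A : Matrix (Fin m) (Fin n) ℝ) : frobNorm Aᵀ = frobNorm A := by
  rw [frobNorm, frobNorm, trace_transpose_mul]

lemma trace_transpose_mul_le_frobNorm_mul_frobNorm (A B : Matrix (Fin m) (Fin n) ℝ) :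
    trace (Aᵀ * B) ≤ frobNorm A * frobNorm B := by
  simpa only [inner_toLp_vec, frobNorm_eq_norm_toLp_vec] using
    real_inner_le_norm (WithLp.toLp 2 (vec A)) (WithLp.toLp 2 (vec B))

end Frobenius

lemma sum_vecMulVec_eq_transpose_mul {ι m n R : Type*} [Fintype ι] [NonUnitalNonAssocSemiring R]
    (A : Matrix ι m R) (B : Matrix ι n R) : ∑ i, vecMulVec (A i) (B i) = Aᵀ * B := by
  ext j k
  simp only [Matrix.sum_apply, vecMulVec_apply, mul_apply, transpose_apply]

section GroupLasso

variable {ι : Type*} [Fintype ι] {n M : ℕ} {N : ι → ℕ} {lam : ℝ}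
  {Y : Matrix (Fin n) (Fin M) ℝ} {X : ∀ k, Matrix (Fin n) (Fin (N k)) ℝ}
  {B : ∀ k, Matrix (Fin M) (Fin (N k)) ℝ}

/-- The fitted values of the multivariate linear regression with coefficient matrices `B k`. The
samples are the rows of the design matrices `X k`, so row `i` of the fit is `∑ k, B k *ᵥ X k i`. -/
def groupLassoFit (X : ∀ k, Matrix (Fin n) (Fin (N k)) ℝ)
    (B : ∀ k, Matrix (Fin M) (Fin (N k)) ℝ) : Matrix (Fin n) (Fin M) ℝ :=
  ∑ k, X k * (B k)ᵀ

/-- The group-lasso objective: the least-squares loss of the fit, averaged over the `n` samples,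
penalized by `lam` times the sum of the Frobenius norms of the coefficient matrices. The groups may
have different numbers `N k` of columns. -/
noncomputable def groupLassoObjective (lam : ℝ) (Y : Matrix (Fin n) (Fin M) ℝ)
    (X : ∀ k, Matrix (Fin n) (Fin (N k)) ℝ) (B : ∀ k, Matrix (Fin M) (Fin (N k)) ℝ) : ℝ :=
  1 / (2 * n) * frobNorm (Y - groupLassoFit X B) ^ 2 + lam * ∑ k, frobNorm (B k)

lemma groupLassoFit_apply (i : Fin n) (j : Fin M) :
    groupLassoFit X B i j = ∑ k, (B k *ᵥ X k i) j := by
  simp only [groupLassoFit, Matrix.sum_apply, mul_apply, transpose_apply, mulVec, dotProduct,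
    mul_comm]

lemma groupLassoObjective_eq_sum_sq :
    groupLassoObjective lam Y X B =
      1 / (2 * n) * ∑ i, ∑ j, (Y i j - ∑ k, (B k *ᵥ X k i) j) ^ 2 + lam * ∑ k, frobNorm (B k) := by
  simp only [groupLassoObjective, frobNorm_sq, Matrix.sub_apply, groupLassoFit_apply]

lemma groupLassoObjective_zero :
    groupLassoObjective lam Y X 0 = 1 / (2 * n) * frobNorm Y ^ 2 := by
  simp [groupLassoObjective, groupLassoFit, frobNorm_eq_zero_iff.2]

lemma trace_transpose_mul_groupLassoFit :
    trace (Yᵀ * groupLassoFit X B) = ∑ k, trace (((X k)ᵀ * Y)ᵀ * (B k)ᵀ) := by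
  simp only [groupLassoFit, Matrix.mul_sum, trace_sum, transpose_mul, transpose_transpose,
    Matrix.mul_assoc]

lemma trace_transpose_mul_groupLassoFit_le
    (hlam : ∀ k, (1 / n : ℝ) * frobNorm ((X k)ᵀ * Y) ≤ lam) :
    1 / n * trace (Yᵀ * groupLassoFit X B) ≤ lam * ∑ k, frobNorm (B k) := by
  rw [trace_transpose_mul_groupLassoFit, mul_sum, mul_sum]
  refine sum_le_sum fun k _ => ?_
  calc 1 / n * trace (((X k)ᵀ * Y)ᵀ * (B k)ᵀ)
      ≤ 1 / n * (frobNorm ((X k)ᵀ * Y) * frobNorm (B k)ᵀ) := by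
        gcongr
        exact trace_transpose_mul_le_frobNorm_mul_frobNorm _ _
    _ = 1 / n * frobNorm ((X k)ᵀ * Y) * frobNorm (B k) := by rw [frobNorm_transpose, mul_assoc]
    _ ≤ lam * frobNorm (B k) := mul_le_mul_of_nonneg_right (hlam k) (frobNorm_nonneg _)

lemma groupLasso_penalty_nonpos (hn : 0 < n)
    (hlam : ∀ k, (1 / n : ℝ) * frobNorm ((X k)ᵀ * Y) ≤ lam)
    (hB : groupLassoObjective lam Y X B ≤ groupLassoObjective lam Y X 0) :
    lam * ∑ k, frobNorm (B k) ≤ 0 := by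
  rw [groupLassoObjective_zero, groupLassoObjective] at hB
  simp only [frobNorm_eq_norm_toLp_vec (Y - _), frobNorm_eq_norm_toLp_vec Y, vec_sub,
    WithLp.toLp_sub] at hB
  refine nonpos_of_mul_norm_sub_sq_add_le (by positivity) ?_ hB
  have hweight : 2 * (1 / (2 * n) : ℝ) = 1 / n := by field_simp
  rw [inner_toLp_vec, hweight]
  exact trace_transpose_mul_groupLassoFit_le hlam

theorem groupLasso_zero_of_large_lambda_general (hn : 0 < n) (hlam_pos : 0 < lam)
    (hlam : ∀ k, (1 / n : ℝ) * frobNorm ((X k)ᵀ * Y) ≤ lam)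
    (hB : groupLassoObjective lam Y X B ≤ groupLassoObjective lam Y X 0) : B = 0 := by
  have hsum : ∑ k, frobNorm (B k) ≤ 0 :=
    nonpos_of_mul_nonpos_right (groupLasso_penalty_nonpos hn hlam hB) hlam_pos
  have hnonneg : ∀ k ∈ univ, 0 ≤ frobNorm (B k) := fun k _ => frobNorm_nonneg (B k)
  have hnorm := (sum_eq_zero_iff_of_nonneg hnonneg).1 (hsum.antisymm (sum_nonneg hnonneg))
  exact funext fun k => frobNorm_eq_zero_iff.1 (hnorm k (mem_univ k))

end GroupLasso

/-- If `λ > max_k (1/n)·‖Σ_i a^{X_k}_i (a^Y_i)ᵀ‖_F`, then every global minimizer of the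
group-lasso objective is identically zero, i.e. the estimated support set is empty. -/
theorem groupLasso_zero_of_large_lambda
    (n M p : ℕ) (hn : 1 ≤ n) (hM : 1 ≤ M) (hp : 2 ≤ p)
    (lam : ℝ) (hlam0 : 0 < lam)
    (aY : Fin n → Fin M → ℝ) (aX : Fin (p - 1) → Fin n → Fin M → ℝ)
    (F : (Fin (p - 1) → Matrix (Fin M) (Fin M) ℝ) → ℝ)
    (hF : ∀ B, F B =
      (1 / (2 * n) : ℝ) * ∑ i, ∑ j, (aY i j - ∑ k, (B k).mulVec (aX k i) j) ^ 2
        + lam * ∑ k, frobNorm (B k))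
    (hlam : ∀ k : Fin (p - 1),
      (1 / n : ℝ) * frobNorm (∑ i, Matrix.vecMulVec (aX k i) (aY i)) < lam)
    (Bhat : Fin (p - 1) → Matrix (Fin M) (Fin M) ℝ)
    (hmin : ∀ B, F Bhat ≤ F B) :
    ∀ k, Bhat k = 0 := by
  obtain rfl : F = groupLassoObjective lam (of aY) fun k => of (aX k) :=
    funext fun B => (hF B).trans groupLassoObjective_eq_sum_sq.symm
  refine congrFun (groupLasso_zero_of_large_lambda_general hn hlam0 (fun k => ?_) (hmin 0))
  rw [← sum_vecMulVec_eq_transpose_mul]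
  exact (hlam k).le
end

section
/- Let μ be a centered Gaussian measure on a separable real Hilbert space H and set σ₀ = ∫_H ‖x‖² dμ(x), assumed finite. Then for every integer k ≥ 1, ∫_H ‖x‖^{2k} dμ(x) ≤ (2σ₀)^k · k!. -/
open MeasureTheory ProbabilityTheory

/-!
Write `‖x‖² = ∑ᵢ ⟨bᵢ, x⟩²` in a countable orthonormal basis of the completion. Each coordinate is a
centered real Gaussian variable, so its square `fᵢ` satisfies `‖fᵢ‖_p = C ^ (1 / p) * ‖fᵢ‖₁` with
the same constant `C = E |g| ^ (2p)`, `g` standard Gaussian. Minkowski's inequality in `L^p` adds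
these up to `‖∑ fᵢ‖_p ≤ C ^ (1 / p) * ∑ ‖fᵢ‖₁ = C ^ (1 / p) * ‖∑ fᵢ‖₁`, without any independence,
and for `p = k` the constant is `C = (2k - 1)‼ ≤ (2k)‼ = 2 ^ k * k!`.
-/

open scoped ENNReal NNReal Nat InnerProductSpace

section Minkowski

variable {α ι : Type*} [MeasurableSpace α] [Countable ι] {μ : Measure α} {f : ι → α → ℝ≥0∞}
  {p : ℝ}

lemma eLpNorm'_tsum_le (hf : ∀ i, AEMeasurable (f i) μ) (hp : 1 ≤ p) :
    eLpNorm' (fun a ↦ ∑' i, f i a) p μ ≤ ∑' i, eLpNorm' (f i) p μ := by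
  have hp0 : 0 < p := by positivity
  have hmono : Monotone fun (s : Finset ι) a ↦ (∑ i ∈ s, f i a) ^ p := fun s t hst a ↦ by
    dsimp only
    gcongr
  have hsup : ∫⁻ a, (∑' i, f i a) ^ p ∂μ = ⨆ s : Finset ι, ∫⁻ a, (∑ i ∈ s, f i a) ^ p ∂μ := by
    rw [← lintegral_iSup_directed
      (fun s ↦ (Finset.aemeasurable_fun_sum s fun i _ ↦ hf i).pow_const p) hmono.directed_le]
    simp_rw [ENNReal.tsum_eq_iSup_sum]
    exact lintegral_congr fun a ↦ (ENNReal.orderIsoRpow p hp0).map_iSup _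
  rw [eLpNorm', one_div, ENNReal.rpow_inv_le_iff hp0]
  simp only [enorm_eq_self, hsup, iSup_le_iff]
  intro s
  rw [← ENNReal.rpow_inv_le_iff hp0]
  calc (∫⁻ a, (∑ i ∈ s, f i a) ^ p ∂μ) ^ p⁻¹
      = eLpNorm' (∑ i ∈ s, f i) p μ := by
        simp only [eLpNorm', enorm_eq_self, one_div, Finset.sum_apply]
    _ ≤ ∑ i ∈ s, eLpNorm' (f i) p μ :=
        eLpNorm'_sum_le (fun i _ ↦ (hf i).aestronglyMeasurable) hp
    _ ≤ ∑' i, eLpNorm' (f i) p μ := ENNReal.sum_le_tsum s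

lemma lintegral_tsum_rpow_le_mul_of_forall (hf : ∀ i, AEMeasurable (f i) μ) (hp : 1 ≤ p) {C : ℝ≥0∞}
    (h : ∀ i, ∫⁻ a, f i a ^ p ∂μ ≤ C * (∫⁻ a, f i a ∂μ) ^ p) :
    ∫⁻ a, (∑' i, f i a) ^ p ∂μ ≤ C * (∫⁻ a, ∑' i, f i a ∂μ) ^ p := by
  have hp0 : 0 < p := by positivity
  have hroot (D x : ℝ≥0∞) : (D * x ^ p) ^ p⁻¹ = D ^ p⁻¹ * x := by
    rw [ENNReal.mul_rpow_of_nonneg _ _ (by positivity), ENNReal.rpow_rpow_inv hp0.ne']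
  rw [← ENNReal.rpow_le_rpow_iff (inv_pos.2 hp0), hroot, lintegral_tsum hf, ← ENNReal.tsum_mul_left]
  calc (∫⁻ a, (∑' i, f i a) ^ p ∂μ) ^ p⁻¹
      ≤ ∑' i, (∫⁻ a, f i a ^ p ∂μ) ^ p⁻¹ := by
        simpa only [eLpNorm', enorm_eq_self, one_div] using eLpNorm'_tsum_le hf hp
    _ ≤ ∑' i, C ^ p⁻¹ * ∫⁻ a, f i a ∂μ := by
        gcongr with i
        rw [← hroot]
        gcongr
        exact h i

end Minkowski

section GaussianMoments

lemma lintegral_enorm_sq_gaussianReal_zero (v : ℝ≥0) :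
    ∫⁻ x, ‖x‖ₑ ^ 2 ∂gaussianReal 0 v = v := by
  have h := ofReal_variance (memLp_id_gaussianReal (μ := 0) (v := v) 2)
  simpa [evariance, variance_id_gaussianReal, integral_id_gaussianReal] using h.symm

lemma lintegral_enorm_rpow_gaussianReal_zero (v : ℝ≥0) {q : ℝ} (hq : 0 ≤ q) :
    ∫⁻ x, ‖x‖ₑ ^ q ∂gaussianReal 0 v =
      (∫⁻ x, ‖x‖ₑ ^ q ∂gaussianReal 0 1) * (v : ℝ≥0∞) ^ (q / 2) := by
  have hscale : gaussianReal 0 v = (gaussianReal 0 1).map (√v * ·) := by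
    rw [gaussianReal_map_const_mul, mul_zero, mul_one]
    congr 1
    ext
    simp
  have hsqrt : ‖√(v : ℝ)‖ₑ = (v : ℝ≥0∞) ^ (1 / 2 : ℝ) := by
    rw [Real.enorm_eq_ofReal (by positivity), Real.sqrt_eq_rpow,
      ← ENNReal.ofReal_rpow_of_nonneg (by positivity) (by positivity), ENNReal.ofReal_coe_nnreal]
  rw [hscale, lintegral_map (by fun_prop) (by fun_prop)]
  simp_rw [enorm_mul, ENNReal.mul_rpow_of_nonneg _ _ hq]
  rw [lintegral_const_mul _ (by fun_prop), hsqrt, ← ENNReal.rpow_mul, mul_comm, one_div_mul_eq_div]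

lemma integral_abs_rpow_gaussianReal_zero_one {q : ℝ} (hq : -1 < q) :
    ∫ x, |x| ^ q ∂gaussianReal 0 1 = 2 ^ (q / 2) * Real.Gamma ((q + 1) / 2) / √Real.pi := by
  have hdensity (x : ℝ) : gaussianPDFReal 0 1 x • |x| ^ q =
      (√(2 * Real.pi))⁻¹ * (|x| ^ q * Real.exp (-(1 / 2) * |x| ^ (2 : ℝ))) := by
    rw [gaussianPDFReal, NNReal.coe_one, mul_one, mul_one, sub_zero, smul_eq_mul, Real.rpow_two,
      sq_abs, neg_div, div_eq_mul_one_div, neg_mul, mul_comm (x ^ 2), mul_assoc,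
      mul_comm (Real.exp _)]
  have hpow : (1 / 2 : ℝ) ^ (-(q + 1) / 2) = 2 ^ (q / 2) * √2 := by
    rw [one_div, Real.inv_rpow zero_le_two, ← Real.rpow_neg zero_le_two, Real.sqrt_eq_rpow,
      ← Real.rpow_add zero_lt_two]
    ring_nf
  rw [integral_gaussianReal_eq_integral_smul one_ne_zero]
  simp_rw [hdensity]
  rw [integral_const_mul,
    integral_comp_abs (f := fun y ↦ y ^ q * Real.exp (-(1 / 2) * y ^ (2 : ℝ))),
    integral_rpow_mul_exp_neg_mul_rpow zero_lt_two hq one_half_pos, hpow, Real.sqrt_mul zero_le_two]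
  field_simp

-- At `k = 0` truncated subtraction gives `0‼ = 1`, matching the convention `(-1)‼ = 1`.
lemma lintegral_enorm_pow_gaussianReal_zero_one (k : ℕ) :
    ∫⁻ x, ‖x‖ₑ ^ (2 * k) ∂gaussianReal 0 1 = ((2 * k - 1)‼ : ℕ) := by
  have hint : Integrable (fun x : ℝ ↦ ‖x‖ ^ (2 * k)) (gaussianReal 0 1) :=
    (memLp_id_gaussianReal' _ (ENNReal.natCast_ne_top (2 * k))).integrable_norm_pow'
  have hmoment : ∫ x, ‖x‖ ^ (2 * k) ∂gaussianReal 0 1 = ((2 * k - 1)‼ : ℕ) := by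
    have hexp : ((2 * k : ℕ) : ℝ) / 2 = k := by push_cast; ring
    have hGamma : (((2 * k : ℕ) : ℝ) + 1) / 2 = k + 1 / 2 := by push_cast; ring
    calc ∫ x, ‖x‖ ^ (2 * k) ∂gaussianReal 0 1
        = ∫ x, |x| ^ ((2 * k : ℕ) : ℝ) ∂gaussianReal 0 1 := by
          simp only [Real.rpow_natCast, Real.norm_eq_abs]
      _ = 2 ^ k * Real.Gamma (k + 1 / 2) / √Real.pi := by
          rw [integral_abs_rpow_gaussianReal_zero_one
            (neg_one_lt_zero.trans_le (Nat.cast_nonneg _)), hexp, hGamma, Real.rpow_natCast]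
      _ = ((2 * k - 1)‼ : ℕ) := by
          rw [Real.Gamma_nat_add_half]
          field_simp
  rw [← ENNReal.ofReal_natCast, ← hmoment,
    ofReal_integral_eq_lintegral_ofReal hint (ae_of_all _ fun x ↦ by positivity)]
  simp only [ENNReal.ofReal_pow (norm_nonneg _), ofReal_norm]

lemma doubleFactorial_two_mul_sub_one_le (k : ℕ) : (2 * k - 1)‼ ≤ 2 ^ k * k ! := by
  induction k with
  | zero => simp
  | succ k ih =>
    calc (2 * (k + 1) - 1)‼
        = (2 * k + 1) * (2 * k - 1)‼ := Nat.doubleFactorial_add_one (2 * k)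
      _ ≤ (2 * (k + 1)) * (2 ^ k * k !) := Nat.mul_le_mul (by lia) ih
      _ = 2 ^ (k + 1) * (k + 1)! := by rw [Nat.factorial_succ]; ring

end GaussianMoments

section Coordinates

variable {𝕜 E : Type*} [RCLike 𝕜] [NormedAddCommGroup E] [InnerProductSpace 𝕜 E]

lemma countable_of_orthonormal [TopologicalSpace.SeparableSpace E] {ι : Type*} {b : ι → E}
    (hb : Orthonormal 𝕜 b) : Countable ι := by
  refine Pairwise.countable_of_isOpen_disjoint (s := fun i ↦ Metric.ball (b i) (1 / 2))
    (fun i j hij ↦ Metric.ball_disjoint_ball ?_) (fun _ ↦ Metric.isOpen_ball)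
    (fun i ↦ ⟨b i, by simp⟩)
  have hdist : ‖b i - b j‖ ^ 2 = 2 := by
    rw [norm_sub_sq (𝕜 := 𝕜), hb.1 i, hb.1 j, hb.2 hij, map_zero]
    norm_num
  rw [dist_eq_norm]
  nlinarith [norm_nonneg (b i - b j)]

lemma enorm_sq_eq_tsum_enorm_inner_sq {ι : Type*} (b : HilbertBasis ι 𝕜 E) (x : E) :
    ‖x‖ₑ ^ 2 = ∑' i, ‖⟪b i, x⟫_𝕜‖ₑ ^ 2 := by
  have hsum : HasSum (fun i ↦ ‖⟪b i, x⟫_𝕜‖ ^ 2) (‖x‖ ^ 2) := by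
    simpa [HilbertBasis.repr_apply_apply] using lp.hasSum_norm (p := 2) (by simp) (b.repr x)
  simp only [← ofReal_norm, ← ENNReal.ofReal_pow (norm_nonneg _)]
  rw [← hsum.tsum_eq, ENNReal.ofReal_tsum_of_nonneg (fun _ ↦ by positivity) hsum.summable]

variable (𝕜 E) in
lemma exists_countable_forall_enorm_sq_eq_tsum [TopologicalSpace.SeparableSpace E] :
    ∃ (s : Set (UniformSpace.Completion E)) (_ : Countable s) (L : s → StrongDual 𝕜 E),
      ∀ x, ‖x‖ₑ ^ 2 = ∑' i, ‖L i x‖ₑ ^ 2 := by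
  obtain ⟨s, b, -⟩ := exists_hilbertBasis 𝕜 (UniformSpace.Completion E)
  refine ⟨s, countable_of_orthonormal b.orthonormal,
    fun i ↦ innerSL 𝕜 (b i) ∘L UniformSpace.Completion.toComplL, fun x ↦ ?_⟩
  simpa using enorm_sq_eq_tsum_enorm_inner_sq b x

end Coordinates

section GaussianMeasures

lemma lintegral_enorm_dual_rpow_of_isGaussian {E : Type*} [TopologicalSpace E] [AddCommMonoid E]
    [Module ℝ E] [MeasurableSpace E] [OpensMeasurableSpace E] {μ : Measure E} [IsGaussian μ]
    {L : StrongDual ℝ E} (hL : ∫ x, L x ∂μ = 0) {p : ℝ} (hp : 0 ≤ p) :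
    ∫⁻ x, (‖L x‖ₑ ^ 2) ^ p ∂μ =
      (∫⁻ t, ‖t‖ₑ ^ (2 * p) ∂gaussianReal 0 1) * (∫⁻ x, ‖L x‖ₑ ^ 2 ∂μ) ^ p := by
  have hlaw : μ.map L = gaussianReal 0 (Var[L; μ]).toNNReal := by
    rw [IsGaussian.map_eq_gaussianReal, hL]
  have hmap {g : ℝ → ℝ≥0∞} (hg : Measurable g) :
      ∫⁻ x, g (L x) ∂μ = ∫⁻ t, g t ∂gaussianReal 0 (Var[L; μ]).toNNReal := by
    rw [← hlaw, lintegral_map hg L.continuous.measurable]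
  rw [hmap (g := fun t ↦ (‖t‖ₑ ^ 2) ^ p) (by fun_prop),
    hmap (g := fun t ↦ ‖t‖ₑ ^ 2) (by fun_prop), lintegral_enorm_sq_gaussianReal_zero]
  simp_rw [← ENNReal.rpow_two, ← ENNReal.rpow_mul]
  rw [lintegral_enorm_rpow_gaussianReal_zero _ (by positivity), mul_div_cancel_left₀ p two_ne_zero]

variable {H : Type*} [NormedAddCommGroup H] [InnerProductSpace ℝ H]
  [TopologicalSpace.SeparableSpace H] [MeasurableSpace H] [OpensMeasurableSpace H]
  {μ : Measure H} [IsGaussian μ]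

lemma lintegral_enorm_rpow_le_of_isGaussian (hμ : ∀ L : StrongDual ℝ H, ∫ x, L x ∂μ = 0) {p : ℝ}
    (hp : 1 ≤ p) :
    ∫⁻ x, (‖x‖ₑ ^ 2) ^ p ∂μ ≤
      (∫⁻ t, ‖t‖ₑ ^ (2 * p) ∂gaussianReal 0 1) * (∫⁻ x, ‖x‖ₑ ^ 2 ∂μ) ^ p := by
  obtain ⟨s, _, L, hL⟩ := exists_countable_forall_enorm_sq_eq_tsum ℝ H
  simp_rw [hL]
  exact lintegral_tsum_rpow_le_mul_of_forall (fun i ↦ by fun_prop) hp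
    fun i ↦ (lintegral_enorm_dual_rpow_of_isGaussian (hμ (L i)) (by positivity)).le

-- Centering is tested on functionals since `∫ x, x ∂μ` is `0` by convention in an incomplete space.
theorem gaussian_measure_norm_moment_bound_general
    (hμ : ∀ L : StrongDual ℝ H, ∫ x, L x ∂μ = 0) (k : ℕ) :
    ∫⁻ x, ‖x‖ₑ ^ (2 * k) ∂μ ≤ ((2 * k - 1)‼ : ℕ) * (∫⁻ x, ‖x‖ₑ ^ 2 ∂μ) ^ k := by
  rcases k.eq_zero_or_pos with rfl | hk
  · simp
  have h := lintegral_enorm_rpow_le_of_isGaussian hμ (Nat.one_le_cast (α := ℝ).2 hk)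
  rw [← lintegral_enorm_pow_gaussianReal_zero_one]
  have hp : (2 * k : ℝ) = (2 * k : ℕ) := by push_cast; rfl
  simpa only [hp, ENNReal.rpow_natCast, ← pow_mul] using h

end GaussianMeasures

/-- Moment bound for a centered Gaussian measure on a separable real Hilbert space:
if `σ₀ = ∫ ‖x‖² dμ` is finite, then `∫ ‖x‖^{2k} dμ ≤ (2σ₀)^k · k!` for every `k ≥ 1`.
A measure is Gaussian if every continuous linear functional pushes it forward to a
(possibly degenerate) Gaussian measure on `ℝ`; it is centered if its mean is `0`. -/
theorem gaussian_measure_norm_moment_bound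
    {H : Type*} [NormedAddCommGroup H] [InnerProductSpace ℝ H] [CompleteSpace H]
    [TopologicalSpace.SeparableSpace H] [MeasurableSpace H] [BorelSpace H]
    (μ : Measure H) [IsProbabilityMeasure μ]
    (hgauss : ∀ L : H →L[ℝ] ℝ, ∃ (m : ℝ) (v : NNReal),
      Measure.map L μ = gaussianReal m v)
    (hcentered : ∫ x, x ∂μ = 0)
    (σ₀ : ℝ) (hσ₀ : 0 ≤ σ₀)
    (hσ : ∫⁻ x, (‖x‖₊ : ENNReal) ^ 2 ∂μ = ENNReal.ofReal σ₀) :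
    ∀ k : ℕ, 1 ≤ k →
      ∫⁻ x, (‖x‖₊ : ENNReal) ^ (2 * k) ∂μ ≤
        ENNReal.ofReal ((2 * σ₀) ^ k * (Nat.factorial k)) := by
  intro k _
  have := isGaussian_of_map_eq_gaussianReal hgauss
  have hmean (L : StrongDual ℝ H) : ∫ x, L x ∂μ = 0 := by
    rw [IsGaussian.integral_dual, hcentered, map_zero]
  calc ∫⁻ x, ‖x‖ₑ ^ (2 * k) ∂μ
      ≤ ((2 * k - 1)‼ : ℕ) * (∫⁻ x, ‖x‖ₑ ^ 2 ∂μ) ^ k :=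
        gaussian_measure_norm_moment_bound_general hmean k
    _ ≤ (2 ^ k * k ! : ℕ) * ENNReal.ofReal σ₀ ^ k := by
        gcongr
        · exact doubleFactorial_two_mul_sub_one_le k
        · exact hσ.le
    _ = ENNReal.ofReal ((2 * σ₀) ^ k * k !) := by
        rw [← ENNReal.ofReal_natCast, ← ENNReal.ofReal_pow hσ₀,
          ← ENNReal.ofReal_mul (by positivity)]
        push_cast
        ring_nf
end

section
/- For every m ≥ 1, Σ_{k∈K} Σ_{m'=1}^∞ (b̃_{k,mm'} − b_{k,mm'})² ≤ 2·(Σ_{k∈K} ‖β_k‖_HS²)·Γ_φ(m)² + 2·Σ_{k∈K} Σ_{m'=1}^∞ ( ∫_T∫_T β_k(t,t') φ_m(t) (φ̂_{m'}(t') − φ_{m'}(t')) dt dt' )². -/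
open MeasureTheory

/-- `L²(T)` for a set `T ⊆ ℝ`, with the Lebesgue measure restricted to `T`. -/
noncomputable def muT (T : Set ℝ) : Measure ℝ := volume.restrict T

/-- The product measure on `T × T`, so that `Lp ℝ 2 (piT T)` is `L²(T×T)`. -/
noncomputable def piT (T : Set ℝ) : Measure (ℝ × ℝ) := (volume.restrict T).prod (volume.restrict T)

/-!
A kernel `β ∈ L²(μ × ν)` defines a bilinear form `B(u, v) = ∫ β (u ⊗ v)` with `‖B‖ ≤ ‖β‖`. Split
`B(u', e'ᵢ) - B(u, eᵢ) = B(u' - u, e'ᵢ) + B(u, e'ᵢ - eᵢ)` and use `(a + b)² ≤ 2 a² + 2 b²`. Bessel's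
inequality for the functional `B(u' - u, ·)` bounds the sum over `i` of the squares of the first
terms by `‖B‖² ‖u' - u‖²`.
-/

open scoped ENNReal

theorem norm_add_sq_le_two_mul {E : Type*} [SeminormedAddGroup E] (x y : E) :
    ‖x + y‖ ^ 2 ≤ 2 * ‖x‖ ^ 2 + 2 * ‖y‖ ^ 2 :=
  calc ‖x + y‖ ^ 2
    _ ≤ (‖x‖ + ‖y‖) ^ 2 := by gcongr; exact norm_add_le x y
    _ ≤ 2 * (‖x‖ ^ 2 + ‖y‖ ^ 2) := add_sq_le
    _ = 2 * ‖x‖ ^ 2 + 2 * ‖y‖ ^ 2 := mul_add ..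

section Bessel

variable {𝕜 E F ι : Type*} [RCLike 𝕜] [SeminormedAddCommGroup E] [NormedSpace 𝕜 E]
  [NormedAddCommGroup F] [InnerProductSpace 𝕜 F] [CompleteSpace F] {e e' : ι → F}

theorem summable_sq_norm_apply_orthonormal (f : StrongDual 𝕜 F) (he : Orthonormal 𝕜 e) :
    Summable fun i => ‖f (e i)‖ ^ 2 := by
  simpa only [norm_inner_symm (e _), InnerProductSpace.toDual_symm_apply] using
    he.inner_products_summable ((InnerProductSpace.toDual 𝕜 F).symm f)

theorem tsum_sq_norm_apply_orthonormal_le (f : StrongDual 𝕜 F) (he : Orthonormal 𝕜 e) :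
    ∑' i, ‖f (e i)‖ ^ 2 ≤ ‖f‖ ^ 2 := by
  simpa only [norm_inner_symm (e _), InnerProductSpace.toDual_symm_apply,
    LinearIsometryEquiv.norm_map] using
    he.tsum_inner_products_le ((InnerProductSpace.toDual 𝕜 F).symm f)

theorem summable_sq_norm_apply_sub_orthonormal (f : StrongDual 𝕜 F) (he : Orthonormal 𝕜 e)
    (he' : Orthonormal 𝕜 e') : Summable fun i => ‖f (e i - e' i)‖ ^ 2 := by
  refine .of_nonneg_of_le (fun i => sq_nonneg _) (fun i => ?_)
    (((summable_sq_norm_apply_orthonormal f he).mul_left 2).add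
      ((summable_sq_norm_apply_orthonormal f he').mul_left 2))
  simpa only [map_sub, ← sub_eq_add_neg, norm_neg] using
    norm_add_sq_le_two_mul (f (e i)) (-f (e' i))

theorem tsum_sq_norm_bilinear_sub_le (B : E →L[𝕜] StrongDual 𝕜 F) (u u' : E)
    (he : Orthonormal 𝕜 e) (he' : Orthonormal 𝕜 e') :
    ∑' i, ‖B u' (e' i) - B u (e i)‖ ^ 2 ≤
      2 * (‖B‖ ^ 2 * ‖u' - u‖ ^ 2) + 2 * ∑' i, ‖B u (e' i - e i)‖ ^ 2 := by
  have split (i : ι) : ‖B u' (e' i) - B u (e i)‖ ^ 2 ≤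
      2 * ‖B (u' - u) (e' i)‖ ^ 2 + 2 * ‖B u (e' i - e i)‖ ^ 2 := by
    simpa only [map_sub, sub_apply, sub_add_sub_cancel] using
      norm_add_sq_le_two_mul (B (u' - u) (e' i)) (B u (e' i - e i))
  have summable_left := (summable_sq_norm_apply_orthonormal (B (u' - u)) he').mul_left 2
  have summable_right := (summable_sq_norm_apply_sub_orthonormal (B u) he' he).mul_left 2
  have summable_split := summable_left.add summable_right
  have bessel : ∑' i, ‖B (u' - u) (e' i)‖ ^ 2 ≤ ‖B‖ ^ 2 * ‖u' - u‖ ^ 2 :=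
    calc ∑' i, ‖B (u' - u) (e' i)‖ ^ 2
      _ ≤ ‖B (u' - u)‖ ^ 2 := tsum_sq_norm_apply_orthonormal_le _ he'
      _ ≤ (‖B‖ * ‖u' - u‖) ^ 2 := by gcongr; exact B.le_opNorm _
      _ = ‖B‖ ^ 2 * ‖u' - u‖ ^ 2 := mul_pow ..
  calc ∑' i, ‖B u' (e' i) - B u (e i)‖ ^ 2
    _ ≤ ∑' i, (2 * ‖B (u' - u) (e' i)‖ ^ 2 + 2 * ‖B u (e' i - e i)‖ ^ 2) :=
      (Summable.of_nonneg_of_le (fun i => sq_nonneg _) split summable_split).tsum_le_tsum split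
        summable_split
    _ = 2 * ∑' i, ‖B (u' - u) (e' i)‖ ^ 2 + 2 * ∑' i, ‖B u (e' i - e i)‖ ^ 2 := by
      rw [summable_left.tsum_add summable_right, tsum_mul_left, tsum_mul_left]
    _ ≤ 2 * (‖B‖ ^ 2 * ‖u' - u‖ ^ 2) + 2 * ∑' i, ‖B u (e' i - e i)‖ ^ 2 := by gcongr

end Bessel

section ProductFunctions

variable {X Y R : Type*} [MeasurableSpace X] [MeasurableSpace Y] [NormedDivisionRing R]
  {μ : Measure X} {ν : Measure Y} [SFinite ν] {f : X → R} {g : Y → R} {p : ℝ≥0∞}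

theorem eLpNorm_mul_prod (hp : p ≠ ∞) (hf : AEStronglyMeasurable f μ)
    (hg : AEStronglyMeasurable g ν) :
    eLpNorm (fun z : X × Y => f z.1 * g z.2) p (μ.prod ν) = eLpNorm f p μ * eLpNorm g p ν := by
  rcases eq_or_ne p 0 with rfl | hp₀
  · simp only [eLpNorm_exponent_zero, mul_zero]
  · simp only [eLpNorm_eq_lintegral_rpow_enorm_toReal hp₀ hp, enorm_mul,
      ENNReal.mul_rpow_of_nonneg _ _ ENNReal.toReal_nonneg]
    rw [lintegral_prod_mul (hf.enorm.pow_const _) (hg.enorm.pow_const _),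
      ENNReal.mul_rpow_of_nonneg _ _ (by positivity)]

theorem memLp_mul_prod (hp : p ≠ ∞) (hf : MemLp f p μ) (hg : MemLp g p ν) :
    MemLp (fun z : X × Y => f z.1 * g z.2) p (μ.prod ν) := by
  refine ⟨hf.1.comp_fst.mul hg.1.comp_snd, ?_⟩
  rw [eLpNorm_mul_prod hp hf.1 hg.1]
  exact ENNReal.mul_lt_top hf.2 hg.2

end ProductFunctions

section KernelForm

variable {X Y 𝕜 : Type*} [MeasurableSpace X] [MeasurableSpace Y] [RCLike 𝕜]
  {μ : Measure X} {ν : Measure Y} {p : ℝ≥0∞}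

theorem integral_kernel_smul_left (β : X × Y → 𝕜) (c : 𝕜) (u : Lp 𝕜 p μ) (v : Y → 𝕜) :
    ∫ z, β z * (c • u : Lp 𝕜 p μ) z.1 * v z.2 ∂(μ.prod ν) =
      c • ∫ z, β z * u z.1 * v z.2 ∂(μ.prod ν) := by
  rw [← integral_smul]
  refine integral_congr_ae ?_
  filter_upwards [Measure.quasiMeasurePreserving_fst.ae (Lp.coeFn_smul c u)] with z hz
  rw [hz, Pi.smul_apply, mul_smul_comm, smul_mul_assoc]

theorem integral_kernel_smul_right (β : X × Y → 𝕜) (c : 𝕜) (u : X → 𝕜) (v : Lp 𝕜 p ν) :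
    ∫ z, β z * u z.1 * (c • v : Lp 𝕜 p ν) z.2 ∂(μ.prod ν) =
      c • ∫ z, β z * u z.1 * v z.2 ∂(μ.prod ν) := by
  rw [← integral_smul]
  refine integral_congr_ae ?_
  filter_upwards [Measure.quasiMeasurePreserving_snd.ae (Lp.coeFn_smul c v)] with z hz
  rw [hz, Pi.smul_apply, mul_smul_comm]

variable [SFinite ν]

theorem integrable_kernel_mul_mul (β : Lp 𝕜 2 (μ.prod ν)) (u : Lp 𝕜 2 μ) (v : Lp 𝕜 2 ν) :
    Integrable (fun z => β z * u z.1 * v z.2) (μ.prod ν) := by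
  simpa only [Pi.mul_def, mul_assoc] using
    (Lp.memLp β).integrable_mul (memLp_mul_prod ENNReal.ofNat_ne_top (Lp.memLp u) (Lp.memLp v))

theorem integral_kernel_add_left (β : Lp 𝕜 2 (μ.prod ν)) (u u' : Lp 𝕜 2 μ) (v : Lp 𝕜 2 ν) :
    ∫ z, β z * (u + u' : Lp 𝕜 2 μ) z.1 * v z.2 ∂(μ.prod ν) =
      (∫ z, β z * u z.1 * v z.2 ∂(μ.prod ν)) + ∫ z, β z * u' z.1 * v z.2 ∂(μ.prod ν) := by
  rw [← integral_add (integrable_kernel_mul_mul β u v) (integrable_kernel_mul_mul β u' v)]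
  refine integral_congr_ae ?_
  filter_upwards [Measure.quasiMeasurePreserving_fst.ae (Lp.coeFn_add u u')] with z hz
  rw [hz, Pi.add_apply, mul_add, add_mul]

theorem integral_kernel_add_right (β : Lp 𝕜 2 (μ.prod ν)) (u : Lp 𝕜 2 μ) (v v' : Lp 𝕜 2 ν) :
    ∫ z, β z * u z.1 * (v + v' : Lp 𝕜 2 ν) z.2 ∂(μ.prod ν) =
      (∫ z, β z * u z.1 * v z.2 ∂(μ.prod ν)) + ∫ z, β z * u z.1 * v' z.2 ∂(μ.prod ν) := by
  rw [← integral_add (integrable_kernel_mul_mul β u v) (integrable_kernel_mul_mul β u v')]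
  refine integral_congr_ae ?_
  filter_upwards [Measure.quasiMeasurePreserving_snd.ae (Lp.coeFn_add v v')] with z hz
  rw [hz, Pi.add_apply, mul_add]

theorem enorm_integral_kernel_le {β : X × Y → 𝕜} {u : X → 𝕜} {v : Y → 𝕜}
    (hβ : AEStronglyMeasurable β (μ.prod ν)) (hu : AEStronglyMeasurable u μ)
    (hv : AEStronglyMeasurable v ν) :
    ‖∫ z, β z * u z.1 * v z.2 ∂(μ.prod ν)‖ₑ ≤
      eLpNorm β 2 (μ.prod ν) * (eLpNorm u 2 μ * eLpNorm v 2 ν) :=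
  calc ‖∫ z, β z * u z.1 * v z.2 ∂(μ.prod ν)‖ₑ
    _ = ‖∫ z, (β • fun z : X × Y => u z.1 * v z.2) z ∂(μ.prod ν)‖ₑ := by
      simp only [Pi.smul_apply', smul_eq_mul, mul_assoc]
    _ ≤ eLpNorm (β • fun z : X × Y => u z.1 * v z.2) 1 (μ.prod ν) := by
      rw [eLpNorm_one_eq_lintegral_enorm]
      exact enorm_integral_le_lintegral_enorm _
    _ ≤ eLpNorm β 2 (μ.prod ν) * eLpNorm (fun z : X × Y => u z.1 * v z.2) 2 (μ.prod ν) :=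
      eLpNorm_smul_le_mul_eLpNorm (hu.comp_fst.mul hv.comp_snd) hβ
    _ = eLpNorm β 2 (μ.prod ν) * (eLpNorm u 2 μ * eLpNorm v 2 ν) := by
      rw [eLpNorm_mul_prod ENNReal.ofNat_ne_top hu hv]

theorem norm_integral_kernel_le (β : Lp 𝕜 2 (μ.prod ν)) (u : Lp 𝕜 2 μ) (v : Lp 𝕜 2 ν) :
    ‖∫ z, β z * u z.1 * v z.2 ∂(μ.prod ν)‖ ≤ ‖β‖ * ‖u‖ * ‖v‖ := by
  have h := enorm_integral_kernel_le (Lp.aestronglyMeasurable β) (Lp.aestronglyMeasurable u)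
    (Lp.aestronglyMeasurable v)
  simp only [← Lp.enorm_def, enorm_eq_nnnorm] at h
  rw [mul_assoc]
  exact_mod_cast h

/-- The form `(u, v) ↦ ∫ β(x, y) u(x) v(y)` on `L²(μ) × L²(ν)` given by a Hilbert–Schmidt kernel
`β`. It is bilinear rather than sesquilinear: no argument is conjugated. -/
noncomputable def kernelForm (β : Lp 𝕜 2 (μ.prod ν)) :
    Lp 𝕜 2 μ →L[𝕜] StrongDual 𝕜 (Lp 𝕜 2 ν) :=
  LinearMap.mkContinuous₂
    (LinearMap.mk₂ 𝕜
      (fun (u : Lp 𝕜 2 μ) (v : Lp 𝕜 2 ν) => ∫ z, β z * u z.1 * v z.2 ∂(μ.prod ν))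
      (integral_kernel_add_left β) (fun c u v => integral_kernel_smul_left β c u v)
      (integral_kernel_add_right β) (fun c u v => integral_kernel_smul_right β c u v))
    ‖β‖ (norm_integral_kernel_le β)

theorem kernelForm_apply (β : Lp 𝕜 2 (μ.prod ν)) (u : Lp 𝕜 2 μ) (v : Lp 𝕜 2 ν) :
    kernelForm β u v = ∫ z, β z * u z.1 * v z.2 ∂(μ.prod ν) :=
  rfl

theorem norm_kernelForm_le (β : Lp 𝕜 2 (μ.prod ν)) : ‖kernelForm β‖ ≤ ‖β‖ :=
  LinearMap.mkContinuous₂_norm_le _ (norm_nonneg β) _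

theorem kernelForm_apply_sub (β : Lp 𝕜 2 (μ.prod ν)) (u : Lp 𝕜 2 μ) (v v' : Lp 𝕜 2 ν) :
    kernelForm β u (v - v') = ∫ z, β z * u z.1 * (v z.2 - v' z.2) ∂(μ.prod ν) := by
  rw [kernelForm_apply]
  refine integral_congr_ae ?_
  filter_upwards [Measure.quasiMeasurePreserving_snd.ae (Lp.coeFn_sub v v')] with z hz
  rw [hz, Pi.sub_apply]

theorem tsum_sq_norm_integral_kernel_sub_le {ι : Type*} (β : Lp 𝕜 2 (μ.prod ν))
    {u u' : Lp 𝕜 2 μ} {e e' : ι → Lp 𝕜 2 ν} (he : Orthonormal 𝕜 e) (he' : Orthonormal 𝕜 e')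
    {γ : ℝ} (hγ : ‖u' - u‖ ≤ γ) :
    ∑' i, ‖(∫ z, β z * u' z.1 * e' i z.2 ∂(μ.prod ν)) -
        ∫ z, β z * u z.1 * e i z.2 ∂(μ.prod ν)‖ ^ 2 ≤
      2 * ‖β‖ ^ 2 * γ ^ 2 +
        2 * ∑' i, ‖∫ z, β z * u z.1 * (e' i z.2 - e i z.2) ∂(μ.prod ν)‖ ^ 2 := by
  simp only [← kernelForm_apply, ← kernelForm_apply_sub]
  rw [mul_assoc]
  refine (tsum_sq_norm_bilinear_sub_le (kernelForm β) u u' he he').trans ?_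
  gcongr
  exact norm_kernelForm_le β

theorem coefficient_perturbation_bound_general {ι K : Type*} [Fintype K]
    (β : K → Lp 𝕜 2 (μ.prod ν)) {u u' : Lp 𝕜 2 μ} {e e' : ι → Lp 𝕜 2 ν}
    (he : Orthonormal 𝕜 e) (he' : Orthonormal 𝕜 e') {γ : ℝ} (hγ : ‖u' - u‖ ≤ γ) :
    ∑ k, ∑' i, ‖(∫ z, β k z * u' z.1 * e' i z.2 ∂(μ.prod ν)) -
        ∫ z, β k z * u z.1 * e i z.2 ∂(μ.prod ν)‖ ^ 2 ≤
      2 * (∑ k, ‖β k‖ ^ 2) * γ ^ 2 +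
        2 * ∑ k, ∑' i, ‖∫ z, β k z * u z.1 * (e' i z.2 - e i z.2) ∂(μ.prod ν)‖ ^ 2 := by
  rw [Finset.mul_sum, Finset.mul_sum, Finset.sum_mul, ← Finset.sum_add_distrib]
  exact Finset.sum_le_sum fun k _ => tsum_sq_norm_integral_kernel_sub_le (β k) he he' hγ

end KernelForm

/-- Coefficient perturbation bound for two orthonormal bases `φ`, `φ̂` of `L²(T)` with
`‖φ̂_m − φ_m‖ ≤ Γ_φ(m)`: for every `m`,
`Σ_k Σ_{m'} (b̃_{k,mm'} − b_{k,mm'})² ≤ 2 (Σ_k ‖β_k‖_HS²) Γ_φ(m)²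
  + 2 Σ_k Σ_{m'} (∫∫ β_k(t,t') φ_m(t) (φ̂_{m'}(t') − φ_{m'}(t')) dt dt')²`. -/
theorem coefficient_perturbation_bound
    (T : Set ℝ) (hT : IsCompact T) (hTpos : 0 < volume T)
    {K : Type*} [Fintype K]
    (β : K → Lp ℝ 2 (piT T))
    (φ φhat : HilbertBasis ℕ ℝ (Lp ℝ 2 (muT T)))
    (Γφ : ℕ → ℝ) (hΓφ : ∀ m, ‖φhat m - φ m‖ ≤ Γφ m)
    (hΓsum : Summable fun m => Γφ m ^ 2)
    (b btilde : K → ℕ → ℕ → ℝ)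
    (hb : ∀ k m m', b k m m' = ∫ x, β k x * φ m x.1 * φ m' x.2 ∂(piT T))
    (hbt : ∀ k m m', btilde k m m' = ∫ x, β k x * φhat m x.1 * φhat m' x.2 ∂(piT T)) :
    ∀ m : ℕ,
      (∑ k, ∑' m', (btilde k m m' - b k m m') ^ 2) ≤
        2 * (∑ k, ‖β k‖ ^ 2) * Γφ m ^ 2 +
          2 * ∑ k, ∑' m',
            (∫ x, β k x * φ m x.1 * (φhat m' x.2 - φ m' x.2) ∂(piT T)) ^ 2 := by
  intro m
  simpa only [hb, hbt, Real.norm_eq_abs, sq_abs] using!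
    coefficient_perturbation_bound_general β φ.orthonormal φhat.orthonormal (hΓφ m)
end
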